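/- arXiv:2104.14998 — 2 statements merged into one kernel-verified Lean document; each statement's English description precedes it below -/
import Mathlib

section
/- Let V be a finite-dimensional complex vector space with a symmetric bilinear form q, and let 𝔖 be a set of endomorphisms of V each of which is skew-adjoint with respect to q (q(Au, w) = -q(u, Aw) for all u, w). Fix f ∈ V and define the critical space H_f as the q-orthogonal complement of the subspace spanned by {A f : A ∈ 𝔖}. If x ∈ V satisfies q(Ax, x - f) = 0 for every A ∈ 𝔖, then x ∈ H_f, i.e. q(x - f, Af) = 0 and hence q(x, Af) = 0 for all A ∈ 𝔖. Moreover f itself lies in H_f. -/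
/-- Theorem 2, parts (1) and (3): if every `A ∈ 𝔖` is skew-adjoint with respect to the
symmetric bilinear form `q` and `x` satisfies the criticality condition
`q (A x) (x - f) = 0` for all `A ∈ 𝔖`, then `x` lies in the critical space
`H_f = (𝔖 · f)^⊥`; moreover `f` itself lies in `H_f`. -/
theorem critical_points_lie_in_critical_space
    {V : Type*} [AddCommGroup V] [Module ℂ V] [FiniteDimensional ℂ V]
    (q : LinearMap.BilinForm ℂ V) (hq : q.IsSymm)
    (S : Set (Module.End ℂ V))
    (hS : ∀ A ∈ S, ∀ u w : V, q (A u) w = - q u (A w))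
    (f x : V)
    (hx : ∀ A ∈ S, q (A x) (x - f) = 0) :
    x ∈ q.orthogonal (Submodule.span ℂ ((fun A : Module.End ℂ V => A f) '' S)) ∧
    (∀ A ∈ S, q (x - f) (A f) = 0) ∧
    (∀ A ∈ S, q x (A f) = 0) ∧
    f ∈ q.orthogonal (Submodule.span ℂ ((fun A : Module.End ℂ V => A f) '' S)) := by
  have hself : ∀ A ∈ S, ∀ u : V, q u (A u) = 0 := by
    intro A hA u
    have h1 := hS A hA u u
    have h2 : q (A u) u = q u (A u) := hq.eq (A u) u
    rw [h2] at h1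
    exact self_eq_neg.mp h1
  have hxA : ∀ A ∈ S, q x (A f) = 0 := by
    intro A hA
    have h1 := hx A hA
    have h2 := hS A hA x x
    have h3 := hS A hA x f
    rw [hself A hA x, neg_zero] at h2
    rw [map_sub, h2, h3] at h1
    simpa using h1
  have key : ∀ y : V, (∀ A ∈ S, q y (A f) = 0) →
      y ∈ q.orthogonal (Submodule.span ℂ ((fun A : Module.End ℂ V => A f) '' S)) := by
    intro y hy
    rw [LinearMap.BilinForm.mem_orthogonal_iff]
    intro n hn
    have hle : Submodule.span ℂ ((fun A : Module.End ℂ V => A f) '' S) ≤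
        LinearMap.ker (q y) := by
      rw [Submodule.span_le]
      rintro _ ⟨A, hA, rfl⟩
      exact hy A hA
    have h0 : q y n = 0 := hle hn
    have h1 : q n y = q y n := hq.eq n y
    exact h1.trans h0
  refine ⟨key x hxA, ?_, hxA, key f fun A hA => hself A hA f⟩
  intro A hA
  rw [map_sub, LinearMap.sub_apply, hxA A hA, hself A hA f, sub_zero]
end

section
/- Let W be an (n+1)-dimensional complex vector space and let A : W → W be a linear endomorphism having n+1 distinct eigenvalues. Then the number of complete flags invariant under A — that is, the number of chains of subspaces L₁ ⊂ L₂ ⊂ … ⊂ L_n of W with dim L_i = i, L_i ⊆ L_{i+1}, and A(L_i) ⊆ L_i for all i — is exactly (n+1)!. -/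
theorem invariant_eq_span {ι : Type*} [Fintype ι] {W : Type*} [AddCommGroup W] [Module ℂ W]
    [FiniteDimensional ℂ W] (A : Module.End ℂ W) (b : Module.Basis ι ℂ W) (μ : ι → ℂ)
    (hμ : Function.Injective μ) (hb : ∀ i, A (b i) = μ i • b i)
    (p : Submodule ℂ W) (hp : p.map A ≤ p) :
    p = Submodule.span ℂ (b '' {k | b k ∈ p}) := by
  apply le_antisymm
  · have htop : ⨆ ν, A.genEigenspace ν 1 = ⊤ := by
      rw [eq_top_iff, ← b.span_eq, Submodule.span_le]
      rintro _ ⟨i, rfl⟩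
      refine Submodule.mem_iSup_of_mem (μ i) ?_
      exact Module.End.mem_eigenspace_iff.2 (hb i)
    have h := Submodule.inf_iSup_genEigenspace (p := p) (f := A)
      (fun x hx => hp (Submodule.mem_map_of_mem hx)) 1
    rw [htop, inf_top_eq] at h
    conv_lhs => rw [h]
    refine iSup_le fun ν => ?_
    rintro x ⟨hxp, hx⟩
    have hx : A x = ν • x := Module.End.mem_eigenspace_iff.1 hx
    have hc : ∀ k, b.repr x k ≠ 0 → ν = μ k := by
      intro k hk
      have h1 : b.repr (A x) k = μ k * b.repr x k := by
        conv_lhs => rw [← b.sum_repr x]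
        simp only [map_sum, map_smul, hb, Finsupp.coe_finset_sum, Finset.sum_apply,
          Finsupp.smul_apply, smul_eq_mul, Module.Basis.repr_self]
        rw [Finset.sum_eq_single k]
        · simp [mul_comm]
        · intro j _ hj
          simp [Finsupp.single_apply, hj]
        · simp
      rw [hx] at h1
      simp only [map_smul, Finsupp.smul_apply, smul_eq_mul] at h1
      exact mul_right_cancel₀ hk h1
    rw [← b.sum_repr x]
    refine Submodule.sum_mem _ fun k _ => ?_
    by_cases hk : b.repr x k = 0
    · simp [hk]
    · refine Submodule.smul_mem _ _ (Submodule.subset_span ⟨k, ?_, rfl⟩)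
      have hxk : x = b.repr x k • b k := by
        conv_lhs => rw [← b.sum_repr x]
        refine Finset.sum_eq_single k (fun j _ hj => ?_) (by simp)
        by_contra h0
        have : b.repr x j ≠ 0 := fun h => h0 (by simp [h])
        exact hj (hμ ((hc j this).symm.trans (hc k hk)))
      rw [hxk] at hxp
      exact (p.smul_mem_iff hk).1 hxp
  · rw [Submodule.span_le]
    rintro _ ⟨k, hk, rfl⟩
    exact hk

theorem basis_mem_span_iff {ι : Type*} {W : Type*} [AddCommGroup W] [Module ℂ W]
    (b : Module.Basis ι ℂ W) (S : Set ι) (k : ι) :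
    b k ∈ Submodule.span ℂ (b '' S) ↔ k ∈ S := by
  rw [b.mem_span_image]
  simp

theorem finrank_span_image {ι : Type*} [Fintype ι] {W : Type*} [AddCommGroup W] [Module ℂ W]
    (b : Module.Basis ι ℂ W) (S : Set ι) :
    Module.finrank ℂ (Submodule.span ℂ (b '' S)) = Nat.card S := by
  classical
  have h := finrank_span_eq_card (b.linearIndependent.comp ((↑) : S → ι) Subtype.val_injective)
  rw [Set.range_comp, Subtype.range_coe] at h
  rw [h, Nat.card_eq_fintype_card]

theorem exists_perm_of_chain (n : ℕ) (S : Fin n → Set (Fin (n + 1)))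
    (hcard : ∀ i, Nat.card (S i) = (i : ℕ) + 1) (hS : Monotone S) :
    ∃ σ : Equiv.Perm (Fin (n + 1)), ∀ i, S i = {k | σ.symm k ≤ i.castSucc} := by
  classical
  have hlt : ∀ k, (Finset.univ.filter fun i : Fin n => k ∉ S i).card < n + 1 := fun k =>
    Nat.lt_succ_of_le ((Finset.card_le_univ _).trans (by simp))
  let r : Fin (n + 1) → Fin (n + 1) := fun k => ⟨_, hlt k⟩
  have hr : ∀ k i, k ∈ S i ↔ r k ≤ i.castSucc := by
    intro k i
    rw [Fin.le_def]
    change _ ↔ (Finset.univ.filter fun i : Fin n => k ∉ S i).card ≤ (i : ℕ)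
    constructor
    · intro hk
      rw [← Fin.card_Iio i]
      refine Finset.card_le_card fun j hj => ?_
      simp only [Finset.mem_filter, Finset.mem_univ, true_and] at hj
      rw [Finset.mem_Iio]
      by_contra h
      exact hj (hS (not_lt.1 h) hk)
    · intro h
      by_contra hk
      have : (Finset.Iic i).card ≤ (Finset.univ.filter fun i : Fin n => k ∉ S i).card := by
        refine Finset.card_le_card fun j hj => ?_
        simp only [Finset.mem_filter, Finset.mem_univ, true_and]
        exact fun hj' => hk (hS (Finset.mem_Iic.1 hj) hj')
      rw [Fin.card_Iic] at this
      omega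
  have hle : ∀ m : ℕ, m ≤ n →
      (Finset.univ.filter fun k => (r k : ℕ) ≤ m).card = m + 1 := by
    intro m hm
    rcases hm.lt_or_eq with hm | rfl
    · rw [← hcard ⟨m, hm⟩, Nat.card_eq_fintype_card, Fintype.card_subtype]
      congr 1
      ext k
      simp [hr, Fin.le_def]
    · rw [Finset.filter_true_of_mem]
      · simp
      · intro k _
        have := (r k).2
        omega
  have hsurj : Function.Surjective r := by
    intro i
    by_contra! h
    have h1 := hle i (by omega)
    have h2 : (Finset.univ.filter fun k => (r k : ℕ) < i).card = i := by
      rcases Nat.eq_zero_or_pos (i : ℕ) with h0 | h0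
      · simp [h0]
      · have := hle (i - 1) (by omega)
        rw [Nat.sub_add_cancel h0] at this
        rw [← this]
        congr 1
        ext k
        simp only [Finset.mem_filter, Finset.mem_univ, true_and]
        omega
    have h3 : (Finset.univ.filter fun k => (r k : ℕ) ≤ i)
        = (Finset.univ.filter fun k => (r k : ℕ) < i) := by
      ext k
      have := h k
      simp only [Finset.mem_filter, Finset.mem_univ, true_and]
      rw [Ne, Fin.ext_iff] at this
      omega
    rw [h3] at h1
    omega
  refine ⟨(Equiv.ofBijective r (Finite.surjective_iff_bijective.1 hsurj)).symm, fun i => ?_⟩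
  ext k
  simp [hr]

/-- The count behind `χ(𝔽_n) = (n+1)!`: an endomorphism of an `(n+1)`-dimensional
complex vector space with `n+1` distinct eigenvalues has exactly `(n+1)!` invariant
complete flags. -/
theorem card_invariant_complete_flags (n : ℕ)
    {W : Type*} [AddCommGroup W] [Module ℂ W] [FiniteDimensional ℂ W]
    (hW : Module.finrank ℂ W = n + 1)
    (A : Module.End ℂ W)
    (μ : Fin (n + 1) → ℂ) (hμ : Function.Injective μ)
    (hev : ∀ i, A.HasEigenvalue (μ i)) :
    Nat.card {L : Fin n → Submodule ℂ W //
      (∀ i : Fin n, Module.finrank ℂ (L i) = (i : ℕ) + 1) ∧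
      Monotone L ∧
      (∀ i : Fin n, (L i).map A ≤ L i)} = Nat.factorial (n + 1) := by
  classical
  choose v hv using fun i => (hev i).exists_hasEigenvector
  have hli := Module.End.eigenvectors_linearIndependent' A μ hμ v hv
  obtain ⟨b, hb⟩ : ∃ b : Module.Basis (Fin (n + 1)) ℂ W, ∀ i, A (b i) = μ i • b i :=
    ⟨basisOfLinearIndependentOfCardEqFinrank hli (by simp [hW]), fun i => by
      simpa using (hv i).apply_eq_smul⟩
  let F : Equiv.Perm (Fin (n + 1)) → {L : Fin n → Submodule ℂ W //
      (∀ i : Fin n, Module.finrank ℂ (L i) = (i : ℕ) + 1) ∧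
      Monotone L ∧
      (∀ i : Fin n, (L i).map A ≤ L i)} := fun σ =>
    ⟨fun i => Submodule.span ℂ (b '' {k | σ.symm k ≤ i.castSucc}), by
      refine ⟨fun i => ?_, fun i j hij => ?_, fun i => ?_⟩
      · rw [finrank_span_image]
        have e : {k | σ.symm k ≤ i.castSucc} ≃ {k // k ≤ i.castSucc} :=
          σ.symm.subtypeEquiv fun k => Iff.rfl
        rw [Nat.card_congr e, Nat.card_eq_fintype_card]
        rw [Fintype.card_subtype, show (Finset.univ.filter fun k => k ≤ i.castSucc) =
          Finset.Iic i.castSucc by ext; simp, Fin.card_Iic]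
        simp
      · refine Submodule.span_mono (Set.image_mono fun k hk => ?_)
        exact le_trans (α := Fin (n + 1)) hk (Fin.castSucc_le_castSucc_iff.2 hij)
      · rw [Submodule.map_span_le]
        rintro _ ⟨k, hk, rfl⟩
        rw [hb]
        exact Submodule.smul_mem _ _ (Submodule.subset_span ⟨k, hk, rfl⟩)⟩
  have hF : Function.Bijective F := by
    constructor
    · intro σ τ h
      have h1 : ∀ (i : Fin n) k, σ.symm k ≤ i.castSucc ↔ τ.symm k ≤ i.castSucc := by
        intro i k
        have h2 := congrFun (congrArg Subtype.val h) i
        have h3 := basis_mem_span_iff b {k | σ.symm k ≤ i.castSucc} k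
        have h4 := basis_mem_span_iff b {k | τ.symm k ≤ i.castSucc} k
        exact h3.symm.trans ((by rw [show Submodule.span ℂ (b '' {k | σ.symm k ≤ i.castSucc}) =
          Submodule.span ℂ (b '' {k | τ.symm k ≤ i.castSucc}) from h2]) : _ ↔ _) |>.trans h4
      have : σ.symm = τ.symm := by
        ext1 k
        refine eq_of_forall_ge_iff fun c => ?_
        induction c using Fin.lastCases with
        | last => simp [Fin.le_last]
        | cast i => exact h1 i k
      exact Equiv.symm_bijective.1 this
    · rintro ⟨L, hL1, hL2, hL3⟩
      have hspan := fun i => invariant_eq_span A b μ hμ hb (L i) (hL3 i)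
      obtain ⟨σ, hσ⟩ := exists_perm_of_chain n (fun i => {k | b k ∈ L i})
        (fun i => by rw [← hL1 i, ← finrank_span_image b, ← hspan i])
        (fun i j hij k hk => hL2 hij hk)
      refine ⟨σ, Subtype.ext (funext fun i => ?_)⟩
      change Submodule.span ℂ (b '' {k | σ.symm k ≤ i.castSucc}) = L i
      rw [← hσ i, ← hspan i]
  rw [← Nat.card_congr (Equiv.ofBijective F hF), Nat.card_eq_fintype_card, Fintype.card_perm,
    Fintype.card_fin]
end
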